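/- (Pointwise convergence rate of the relaxed PR splitting method.) Let 𝒳 be a finite-dimensional real inner product space, β ≥ 0, A, B : 𝒳 ⇉ 𝒳 maximal β-strongly monotone with (A+B)⁻¹(0) ≠ ∅, γ > 0, θ₀ := 1 + γβ/2, θ̃ := min{θ, θ₀}, and assume θ ∈ (0, 2θ₀). Let {(u_k, v_k, x_k)} be generated by the relaxed PR splitting method from x₀, and set a_k := (x_{k−1} − u_k)/γ, b_k := (2u_k − v_k − x_{k−1})/γ. Then for every k ≥ 1 and every z* = (u*, u*, x*) ∈ (ℒ_{θ̃} + γC)⁻¹(0): a_k + b_k ∈ A(u_k) + B(v_k), and γ‖a_k + b_k‖ = ‖u_k − v_k‖ ≤ √2 ‖x₀ − x*‖ / (√k · √(2θ̃ − θ)). -/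

import Mathlib

open RealInnerProductSpace Filter Pointwise

/-- The inner product on the triple product space `𝒵 = 𝒳 × 𝒳 × 𝒳`. -/
noncomputable def inner3 {X : Type*} [NormedAddCommGroup X] [InnerProductSpace ℝ X]
    (z z' : X × X × X) : ℝ :=
  ⟪z.1, z'.1⟫ + ⟪z.2.1, z'.2.1⟫ + ⟪z.2.2, z'.2.2⟫

/-- The linear map `ℒ_θ̃(u,v,x) := ((1−θ̃)u + θ̃v − x, (θ̃−2)u + (1−θ̃)v + x, u − v)`. -/
def Lmap {X : Type*} [NormedAddCommGroup X] [InnerProductSpace ℝ X]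
    (θ : ℝ) (z : X × X × X) : X × X × X :=
  ((1 - θ) • z.1 + θ • z.2.1 - z.2.2,
    (θ - 2) • z.1 + (1 - θ) • z.2.1 + z.2.2,
    z.1 - z.2.1)

/-- The operator `(ℒ_θ̃ + γC)(u,v,x)` where `C(u,v,x) := A(u) × B(v) × {0}`. -/
def LC {X : Type*} [NormedAddCommGroup X] [InnerProductSpace ℝ X]
    (θ γ : ℝ) (A B : X → Set X) (z : X × X × X) : Set (X × X × X) :=
  {rr | ∃ a ∈ A z.1, ∃ b ∈ B z.2.1, rr = Lmap θ z + γ • ((a, b, (0 : X)) : X × X × X)}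

/-- `T : 𝒳 ⇉ 𝒳` is β-strongly monotone (β = 0 meaning just monotone). -/
def StrMono {X : Type*} [NormedAddCommGroup X] [InnerProductSpace ℝ X]
    (β : ℝ) (T : X → Set X) : Prop :=
  ∀ x x' w w' : X, w ∈ T x → w' ∈ T x' → β * ‖x - x'‖ ^ 2 ≤ ⟪w - w', x - x'⟫

/-- `T : 𝒳 ⇉ 𝒳` is maximal β-strongly monotone: it is β-strongly monotone and its graph
is not properly contained in the graph of another monotone operator. -/
def MaxStrMono {X : Type*} [NormedAddCommGroup X] [InnerProductSpace ℝ X]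
    (β : ℝ) (T : X → Set X) : Prop :=
  StrMono β T ∧ ∀ T' : X → Set X, StrMono 0 T' → (∀ x, T x ⊆ T' x) → T' = T

/-- Monotonicity of an operator on the triple product space `𝒵 = 𝒳³`. -/
def Mono3 {X : Type*} [NormedAddCommGroup X] [InnerProductSpace ℝ X]
    (T : (X × X × X) → Set (X × X × X)) : Prop :=
  ∀ z z' t t', t ∈ T z → t' ∈ T z' → 0 ≤ inner3 (z - z') (t - t')

/-- Maximal monotonicity of an operator on the triple product space `𝒵 = 𝒳³`. -/
def MaxMono3 {X : Type*} [NormedAddCommGroup X] [InnerProductSpace ℝ X]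
    (T : (X × X × X) → Set (X × X × X)) : Prop :=
  Mono3 T ∧ ∀ T', Mono3 T' → (∀ z, T z ⊆ T' z) → T' = T

/-- The ε-enlargement `T^[ε]` of an operator on `𝒳`. -/
def epsEnlX {X : Type*} [NormedAddCommGroup X] [InnerProductSpace ℝ X]
    (T : X → Set X) (ε : ℝ) (z : X) : Set X :=
  {t | ∀ z' t' : X, t' ∈ T z' → -ε ≤ ⟪t - t', z - z'⟫}

/-- The relaxed Peaceman–Rachford splitting method with relaxation parameter `θ` and
scaling `γ`: for `k ≥ 1`, `u_k = J_{γA}(x_{k−1})`, `v_k = J_{γB}(2u_k − x_{k−1})`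
(expressed through resolvent inclusions) and `x_k = x_{k−1} + θ(v_k − u_k)`. -/
structure RPR {X : Type*} [NormedAddCommGroup X] [InnerProductSpace ℝ X]
    (A B : X → Set X) (γ θ : ℝ) (x u v : ℕ → X) : Prop where
  resA : ∀ k, 1 ≤ k → x (k - 1) - u k ∈ γ • A (u k)
  resB : ∀ k, 1 ≤ k → (2 : ℝ) • u k - x (k - 1) - v k ∈ γ • B (v k)
  step : ∀ k, 1 ≤ k → x k = x (k - 1) + θ • (v k - u k)

/-!
Strong monotonicity of `A` and `B` makes the residual `u - v`, as a function of the current point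
`x`, cocoercive with modulus `θ₀ = 1 + γβ/2`. The method is thus the explicit iteration
`x ↦ x - θ (u - v)` with a cocoercive operator. One estimate for such steps, applied to an iterate
and a zero, bounds the sum of the squared residuals by `‖x₀ - x*‖² / (θ (2θ₀ - θ))`; applied to
two consecutive iterates, it shows that the residuals do not increase. Hence the `k`-th squared
residual is at most the average of the first `k`.
-/

section

variable {X : Type*} [NormedAddCommGroup X] [InnerProductSpace ℝ X]

/-- Cocoercivity with modulus `c` of a set-valued operator, i.e. `c`-strong monotonicity of its
inverse. It is the property that makes the damped iteration `x ↦ x - θ d`, `d ∈ R x`, converge;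
for `0 < c` it already forces `R x` to be a subsingleton. -/
def Cocoercive (c : ℝ) (R : X → Set X) : Prop :=
  ∀ x x' d d' : X, d ∈ R x → d' ∈ R x' → c * ‖d - d'‖ ^ 2 ≤ ⟪x - x', d - d'⟫

/-- The residual operator `x ↦ J_{γA}(x) - J_{γB}(2 J_{γA}(x) - x)` of Peaceman–Rachford
splitting, which drives the iteration. It is set-valued, with the resolvents expressed through
inclusions, so that it is meaningful whether or not the resolvents are everywhere defined. -/
def prResidual (A B : X → Set X) (γ : ℝ) (x : X) : Set X :=
  {d | ∃ u v : X, x - u ∈ γ • A u ∧ (2 : ℝ) • u - x - v ∈ γ • B v ∧ u - v = d}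

namespace Cocoercive

variable {c θ : ℝ} {R : X → Set X}

theorem norm_sub_smul_sq_add_le (hR : Cocoercive c R) (hθ : 0 ≤ θ) {y y' d d' : X}
    (hd : d ∈ R y) (hd' : d' ∈ R y') :
    ‖(y - θ • d) - (y' - θ • d')‖ ^ 2 + θ * (2 * c - θ) * ‖d - d'‖ ^ 2 ≤ ‖y - y'‖ ^ 2 := by
  have hcoc := mul_le_mul_of_nonneg_left (hR y y' d d' hd hd') hθ
  have hsplit : (y - θ • d) - (y' - θ • d') = (y - y') - θ • (d - d') := by module
  rw [hsplit, norm_sub_sq_real, real_inner_smul_right, norm_smul, mul_pow, Real.norm_eq_abs,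
    sq_abs]
  linarith

variable {x d : ℕ → X}

theorem antitone_norm (hR : Cocoercive c R) (hθ : 0 < θ) (hθc : θ ≤ 2 * c)
    (hd : ∀ n, d n ∈ R (x n)) (hx : ∀ n, x (n + 1) = x n - θ • d n) :
    Antitone fun n ↦ ‖d n‖ := by
  refine antitone_nat_of_succ_le fun n ↦ ?_
  have hstep : ∀ m, ‖x (m + 1) - x m‖ = θ * ‖d m‖ := fun m ↦ by
    rw [hx, sub_sub_cancel_left, norm_neg, norm_smul, Real.norm_of_nonneg hθ.le]
  have hest := hR.norm_sub_smul_sq_add_le hθ.le (hd (n + 1)) (hd n)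
  rw [← hx, ← hx, hstep, hstep] at hest
  have hgap : 0 ≤ θ * (2 * c - θ) * ‖d (n + 1) - d n‖ ^ 2 :=
    mul_nonneg (mul_nonneg hθ.le (sub_nonneg.mpr hθc)) (sq_nonneg _)
  have hsq : (θ * ‖d (n + 1)‖) ^ 2 ≤ (θ * ‖d n‖) ^ 2 := by linarith
  exact le_of_mul_le_mul_left (le_of_sq_le_sq hsq (by positivity)) hθ

theorem norm_sub_sq_add_sum_le (hR : Cocoercive c R) (hθ : 0 ≤ θ)
    (hd : ∀ n, d n ∈ R (x n)) (hx : ∀ n, x (n + 1) = x n - θ • d n) {z : X} (hz : 0 ∈ R z)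
    (n : ℕ) :
    ‖x n - z‖ ^ 2 + θ * (2 * c - θ) * ∑ i ∈ Finset.range n, ‖d i‖ ^ 2 ≤ ‖x 0 - z‖ ^ 2 := by
  induction n with
  | zero => simp
  | succ n ih =>
    have hest := hR.norm_sub_smul_sq_add_le hθ (hd n) hz
    rw [← hx, smul_zero, sub_zero, sub_zero] at hest
    rw [Finset.sum_range_succ, mul_add]
    linarith

theorem norm_le_div_sqrt (hR : Cocoercive c R) (hθ : 0 < θ) (hθc : θ < 2 * c)
    (hd : ∀ n, d n ∈ R (x n)) (hx : ∀ n, x (n + 1) = x n - θ • d n) {z : X} (hz : 0 ∈ R z)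
    (n : ℕ) :
    ‖d n‖ ≤ ‖x 0 - z‖ / (√(n + 1 : ℕ) * √(θ * (2 * c - θ))) := by
  have hmod : 0 < θ * (2 * c - θ) := mul_pos hθ (sub_pos.mpr hθc)
  have hmin : (n + 1 : ℕ) * ‖d n‖ ^ 2 ≤ ∑ i ∈ Finset.range (n + 1), ‖d i‖ ^ 2 := by
    have hle : ∀ i ∈ Finset.range (n + 1), ‖d n‖ ^ 2 ≤ ‖d i‖ ^ 2 := fun i hi ↦
      pow_le_pow_left₀ (norm_nonneg _) (hR.antitone_norm hθ hθc.le hd hx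
        (Nat.lt_succ_iff.mp (Finset.mem_range.mp hi))) 2
    simpa only [Finset.card_range, nsmul_eq_mul] using Finset.card_nsmul_le_sum _ _ _ hle
  have hsum := hR.norm_sub_sq_add_sum_le hθ.le hd hx hz (n + 1)
  have hsq : (‖d n‖ * (√(n + 1 : ℕ) * √(θ * (2 * c - θ)))) ^ 2 ≤ ‖x 0 - z‖ ^ 2 := by
    calc (‖d n‖ * (√(n + 1 : ℕ) * √(θ * (2 * c - θ)))) ^ 2
        = θ * (2 * c - θ) * ((n + 1 : ℕ) * ‖d n‖ ^ 2) := by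
          rw [mul_pow, mul_pow, Real.sq_sqrt (Nat.cast_nonneg _), Real.sq_sqrt hmod.le]
          ring
      _ ≤ θ * (2 * c - θ) * ∑ i ∈ Finset.range (n + 1), ‖d i‖ ^ 2 := by gcongr
      _ ≤ ‖x 0 - z‖ ^ 2 := by linarith [sq_nonneg ‖x (n + 1) - z‖]
  rw [le_div_iff₀ (by positivity)]
  exact le_of_sq_le_sq hsq (norm_nonneg _)

end Cocoercive

theorem StrMono.smul {β γ : ℝ} {T : X → Set X} (hT : StrMono β T) (hγ : 0 ≤ γ) :
    StrMono (γ * β) fun x ↦ γ • T x := by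
  rintro x x' _ _ ⟨w, hw, rfl⟩ ⟨w', hw', rfl⟩
  rw [← smul_sub, real_inner_smul_left, mul_assoc]
  exact mul_le_mul_of_nonneg_left (hT x x' w w' hw hw') hγ

theorem norm_sub_sq_le_two_mul (p q : X) : ‖p - q‖ ^ 2 ≤ 2 * (‖p‖ ^ 2 + ‖q‖ ^ 2) := by
  linarith [parallelogram_law_with_norm ℝ p q, mul_self_nonneg ‖p + q‖]

theorem inner_sub_add_inner_two_smul_sub_sub (p q r : X) :
    ⟪p - q, q⟫ + ⟪(2 : ℝ) • q - p - r, r⟫ = ⟪p, q - r⟫ - ‖q - r‖ ^ 2 := by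
  rw [norm_sub_sq_real, ← real_inner_self_eq_norm_sq, ← real_inner_self_eq_norm_sq]
  simp only [inner_sub_left, inner_sub_right, real_inner_smul_left]
  ring

theorem StrMono.cocoercive_prResidual {β γ : ℝ} {A B : X → Set X} (hA : StrMono β A)
    (hB : StrMono β B) (hβ : 0 ≤ β) (hγ : 0 ≤ γ) :
    Cocoercive (1 + γ * β / 2) (prResidual A B γ) := by
  rintro x x' _ _ ⟨u, v, hu, hv, rfl⟩ ⟨u', v', hu', hv', rfl⟩
  have hAu := hA.smul hγ u u' _ _ hu hu'
  have hBv := hB.smul hγ v v' _ _ hv hv'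
  have hid := inner_sub_add_inner_two_smul_sub_sub (x - x') (u - u') (v - v')
  have hpar := mul_le_mul_of_nonneg_left (norm_sub_sq_le_two_mul (u - u') (v - v'))
    (mul_nonneg hγ hβ)
  rw [sub_sub_sub_comm x] at hAu
  have hrearrange : (2 : ℝ) • u - x - v - ((2 : ℝ) • u' - x' - v') =
    (2 : ℝ) • (u - u') - (x - x') - (v - v') := by module
  rw [hrearrange] at hBv
  rw [sub_sub_sub_comm u]
  linarith

theorem Lmap_diag (τ : ℝ) (u x : X) : Lmap τ (u, u, x) = (u - x, x - u, 0) := by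
  simp only [Lmap, Prod.mk.injEq, sub_self, and_true]
  constructor <;> module

theorem zero_mem_LC_diag_iff {A B : X → Set X} {τ γ : ℝ} {u x : X} :
    0 ∈ LC τ γ A B (u, u, x) ↔ x - u ∈ γ • A u ∧ (2 : ℝ) • u - x - u ∈ γ • B u := by
  have hzero (a b : X) : 0 = Lmap τ (u, u, x) + γ • (a, b, (0 : X)) ↔
      γ • a = x - u ∧ γ • b = u - x := by
    simp only [Lmap_diag, Prod.smul_mk, Prod.mk_add_mk, smul_zero, add_zero, Prod.zero_eq_mk,
      Prod.mk.injEq, and_true, eq_comm (a := (0 : X)), add_eq_zero_iff_neg_eq, neg_sub,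
      eq_comm (b := γ • _)]
  have hu : (2 : ℝ) • u - x - u = u - x := by module
  simp only [LC, Set.mem_ofPred_eq, hzero, hu, Set.mem_smul_set]
  tauto

theorem zero_mem_prResidual_iff {A B : X → Set X} {γ : ℝ} {x : X} (τ : ℝ) :
    0 ∈ prResidual A B γ x ↔ ∃ u, 0 ∈ LC τ γ A B (u, u, x) := by
  simp only [zero_mem_LC_diag_iff]
  constructor
  · rintro ⟨u, v, hu, hv, huv⟩
    obtain rfl := sub_eq_zero.mp huv
    exact ⟨u, hu, hv⟩
  · rintro ⟨u, hu, hv⟩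
    exact ⟨u, u, hu, hv, sub_self u⟩

theorem RPR.norm_sub_le_div_sqrt {A B : X → Set X} {β γ θ : ℝ} {x u v : ℕ → X}
    (hpr : RPR A B γ θ x u v) (hA : StrMono β A) (hB : StrMono β B) (hβ : 0 ≤ β) (hγ : 0 ≤ γ)
    (hθ : 0 < θ) (hθlt : θ < 2 * (1 + γ * β / 2)) {z : X} (hz : 0 ∈ prResidual A B γ z)
    {k : ℕ} (hk : 1 ≤ k) :
    ‖u k - v k‖ ≤ ‖x 0 - z‖ / (√k * √(θ * (2 * (1 + γ * β / 2) - θ))) := by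
  obtain ⟨n, rfl⟩ := Nat.exists_eq_add_of_le' hk
  refine (hA.cocoercive_prResidual hB hβ hγ).norm_le_div_sqrt (d := fun n ↦ u (n + 1) - v (n + 1))
    hθ hθlt (fun m ↦ ?_) (fun m ↦ ?_) hz n
  · exact ⟨_, _, hpr.resA (m + 1) m.succ_pos, hpr.resB (m + 1) m.succ_pos, rfl⟩
  · rw [hpr.step (m + 1) m.succ_pos, Nat.add_sub_cancel, sub_eq_add_neg (x m), ← smul_neg, neg_sub]

theorem two_mul_min_sub_pos {θ θ₀ : ℝ} (hθ : 0 < θ) (hθlt : θ < 2 * θ₀) :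
    0 < 2 * min θ θ₀ - θ := by
  rcases min_choice θ θ₀ with h | h <;> rw [h] <;> linarith

theorem two_mul_min_sub_le_mul {θ θ₀ : ℝ} (hθ₀ : 1 ≤ θ₀) (hθ : 0 ≤ θ) (hθle : θ ≤ 2 * θ₀) :
    2 * min θ θ₀ - θ ≤ θ * (2 * θ₀ - θ) := by
  rcases le_total θ θ₀ with h | h
  · calc 2 * min θ θ₀ - θ = θ * 1 := by rw [min_eq_left h]; ring
      _ ≤ θ * (2 * θ₀ - θ) := mul_le_mul_of_nonneg_left (by linarith) hθ
  · calc 2 * min θ θ₀ - θ = 1 * (2 * θ₀ - θ) := by rw [min_eq_right h]; ring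
      _ ≤ θ * (2 * θ₀ - θ) := mul_le_mul_of_nonneg_right (hθ₀.trans h) (by linarith)

theorem div_sqrt_mul_sqrt_le_sqrt_two_mul_div {θ θ₀ r : ℝ} (hθ₀ : 1 ≤ θ₀) (hθ : 0 < θ)
    (hθlt : θ < 2 * θ₀) (hr : 0 ≤ r) (t : ℝ) :
    r / (√t * √(θ * (2 * θ₀ - θ))) ≤ √2 * r / (√t * √(2 * min θ θ₀ - θ)) := by
  have hpos := Real.sqrt_pos.mpr (two_mul_min_sub_pos hθ hθlt)
  have hle := Real.sqrt_le_sqrt (two_mul_min_sub_le_mul hθ₀ hθ.le hθlt.le)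
  have hr2 : r ≤ √2 * r := le_mul_of_one_le_left hr Real.one_lt_sqrt_two.le
  rw [div_mul_eq_div_div, div_mul_eq_div_div]
  gcongr

theorem stmt16_general {β : ℝ} (hβ : 0 ≤ β) {A B : X → Set X} (hA : StrMono β A)
    (hB : StrMono β B) {γ θ θ0 τ : ℝ} (hγ : 0 < γ) (hθ0 : θ0 = 1 + γ * β / 2) (hθpos : 0 < θ)
    (hθlt : θ < 2 * θ0) {x u v : ℕ → X} (hpr : RPR A B γ θ x u v) {a b : ℕ → X}
    (ha : ∀ k, a k = γ⁻¹ • (x (k - 1) - u k))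
    (hb : ∀ k, b k = γ⁻¹ • ((2 : ℝ) • u k - v k - x (k - 1)))
    {k : ℕ} (hk : 1 ≤ k) {ustar xstar : X} (hz : 0 ∈ LC τ γ A B (ustar, ustar, xstar)) :
    a k + b k ∈ A (u k) + B (v k)
      ∧ γ * ‖a k + b k‖ = ‖u k - v k‖
      ∧ ‖u k - v k‖ ≤ ‖x 0 - xstar‖ / (√k * √(θ * (2 * θ0 - θ))) := by
  subst hθ0
  have hak : a k ∈ A (u k) := by
    rw [ha, ← Set.mem_smul_set_iff_inv_smul_mem₀ hγ.ne']
    exact hpr.resA k hk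
  have hbk : b k ∈ B (v k) := by
    rw [hb, ← Set.mem_smul_set_iff_inv_smul_mem₀ hγ.ne', sub_right_comm]
    exact hpr.resB k hk
  have hab : γ • (a k + b k) = u k - v k := by
    rw [ha, hb, ← smul_add, smul_inv_smul₀ hγ.ne']
    module
  refine ⟨Set.add_mem_add hak hbk, ?_, ?_⟩
  · rw [← hab, norm_smul, Real.norm_of_nonneg hγ.le]
  · exact hpr.norm_sub_le_div_sqrt hA hB hβ hγ.le hθpos hθlt
      ((zero_mem_prResidual_iff τ).mpr ⟨ustar, hz⟩) hk

end

/-- Pointwise convergence rate of the relaxed PR splitting method for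
`θ ∈ (0, 2θ₀)`. -/
theorem stmt16 {X : Type*} [NormedAddCommGroup X] [InnerProductSpace ℝ X]
    [FiniteDimensional ℝ X]
    (β : ℝ) (hβ : 0 ≤ β) (A B : X → Set X)
    (hA : MaxStrMono β A) (hB : MaxStrMono β B)
    (hsol : ∃ u : X, ∃ a ∈ A u, ∃ b ∈ B u, a + b = 0)
    (γ θ θ0 θt : ℝ) (hγ : 0 < γ) (hθ0 : θ0 = 1 + γ * β / 2) (hθt : θt = min θ θ0)
    (hθpos : 0 < θ) (hθlt : θ < 2 * θ0)
    (x u v : ℕ → X) (hpr : RPR A B γ θ x u v)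
    (a b : ℕ → X)
    (ha : ∀ k, a k = γ⁻¹ • (x (k - 1) - u k))
    (hb : ∀ k, b k = γ⁻¹ • ((2 : ℝ) • u k - v k - x (k - 1))) :
    ∀ k, 1 ≤ k → ∀ ustar xstar : X,
      (0 : X × X × X) ∈ LC θt γ A B (ustar, ustar, xstar) →
        a k + b k ∈ A (u k) + B (v k)
        ∧ γ * ‖a k + b k‖ = ‖u k - v k‖
        ∧ ‖u k - v k‖
            ≤ Real.sqrt 2 * ‖x 0 - xstar‖ / (Real.sqrt k * Real.sqrt (2 * θt - θ)) := by
  intro k hk ustar xstar hz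
  have hθ0_ge : 1 ≤ θ0 := hθ0 ▸ le_add_of_nonneg_right (by positivity)
  exact (stmt16_general hβ hA.1 hB.1 hγ hθ0 hθpos hθlt hpr ha hb hk hz).imp_right <|
    And.imp_right (·.trans <| hθt ▸
      div_sqrt_mul_sqrt_le_sqrt_two_mul_div hθ0_ge hθpos hθlt (norm_nonneg _) k)
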